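/- Let A = ⟨Q,Σ⟩ be a PFA with |Q| = n and |Σ| = m, let ℓ > 0, let φ be a satisfying assignment for the SAT instance (V,C) encoding (A,ℓ), let χ : {1,…,ℓ} → {1,…,m} assign to each t the unique i with φ(x_{i,t}) = 1, let w = a_{χ(1)}⋯a_{χ(ℓ)}, and let w_t denote the length-t prefix of w (w_0 = ε). Then for each t = 0,1,…,ℓ, the set δ(Q,w_t) is nonempty. -/

import Mathlib

open Set

/-- The extension of the transition function of a PFA (with states `Fin n` and letters
`Fin m`) to subsets of states and words: `δ(S,ε) = S`, `δ(S,va) = ⋃_{q ∈ δ(S,v)} δ(q,a)`. -/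
def pfaExt {n m : ℕ} (δ : Fin n → Fin m → Option (Fin n))
    (S : Set (Fin n)) (w : List (Fin m)) : Set (Fin n) :=
  w.foldl (fun T a => {p | ∃ q ∈ T, δ q a = some p}) S

/-- A nonempty word `w = a₁⋯a_ℓ` is carefully synchronizing for the PFA `δ` if (C1) its
first letter is defined at every state, (C2) for `1 < t ≤ ℓ` the letter `a_t` is defined
at every state of `δ(Q, a₁⋯a_{t-1})`, and (C3) `|δ(Q,w)| = 1`. -/
def CarefulSync {n m : ℕ} (δ : Fin n → Fin m → Option (Fin n)) (w : List (Fin m)) : Prop :=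
  w ≠ [] ∧
  (∀ t : Fin w.length, ∀ q ∈ pfaExt δ Set.univ (w.take t.val), (δ q (w.get t)).isSome) ∧
  (pfaExt δ Set.univ w).ncard = 1

/-- Boolean variables of the SAT instance encoding `(A, ℓ)`: letter variables `x i t`
(`1 ≤ i ≤ m`, `1 ≤ t ≤ ℓ`) and state variables `y j t` (`1 ≤ j ≤ n`, `0 ≤ t ≤ ℓ`). -/
inductive SatVar (n m ℓ : ℕ) : Type where
  | x : Fin m → Fin ℓ → SatVar n m ℓ
  | y : Fin n → Fin (ℓ + 1) → SatVar n m ℓ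
deriving DecidableEq

/-- A literal: a variable together with a polarity (`true` = positive, `false` = negated). -/
abbrev SatLit (n m ℓ : ℕ) := SatVar n m ℓ × Bool

/-- A clause is a disjunction of literals, represented as a list. -/
abbrev SatClause (n m ℓ : ℕ) := List (SatLit n m ℓ)

/-- A truth assignment satisfies a clause if it makes at least one of its literals true. -/
def SatisfiesClause {n m ℓ : ℕ} (φ : SatVar n m ℓ → Bool) (c : SatClause n m ℓ) : Prop :=
  ∃ l ∈ c, φ l.1 = l.2

/-- A truth assignment satisfies a set of clauses if it satisfies every clause in it. -/
def Satisfies {n m ℓ : ℕ} (φ : SatVar n m ℓ → Bool) (C : Set (SatClause n m ℓ)) : Prop :=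
  ∀ c ∈ C, SatisfiesClause φ c

/-- The group `I` of initial clauses: the unit clauses `y_{j,0}` for `1 ≤ j ≤ n`. -/
def clausesI (n m ℓ : ℕ) : Set (SatClause n m ℓ) :=
  {c | ∃ j : Fin n, c = [(SatVar.y j 0, true)]}

/-- The group `L` of letter clauses: for each `t`, the clause `x_{1,t} ∨ ⋯ ∨ x_{m,t}`
and the clauses `¬x_{r,t} ∨ ¬x_{s,t}` for `1 ≤ r < s ≤ m`. -/
def clausesL (n m ℓ : ℕ) : Set (SatClause n m ℓ) :=
  {c | ∃ t : Fin ℓ, c = (List.finRange m).map fun i => ((SatVar.x i t : SatVar n m ℓ), true)} ∪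
  {c | ∃ t : Fin ℓ, ∃ r s : Fin m, r < s ∧
    c = [(SatVar.x r t, false), (SatVar.x s t, false)]}

/-- The group `T` of transition clauses: for each `t` and each pair `(q_j, a_i)`, the
clause `¬y_{j,t-1} ∨ ¬x_{i,t} ∨ y_{k,t}` if `δ(q_j, a_i) = {q_k}`, and the clause
`¬y_{j,t-1} ∨ ¬x_{i,t}` if `δ(q_j, a_i)` is undefined. -/
def clausesT {n m : ℕ} (δ : Fin n → Fin m → Option (Fin n)) (ℓ : ℕ) :
    Set (SatClause n m ℓ) :=
  {c | ∃ (t : Fin ℓ) (j : Fin n) (i : Fin m) (k : Fin n), δ j i = some k ∧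
    c = [(SatVar.y j t.castSucc, false), (SatVar.x i t, false), (SatVar.y k t.succ, true)]} ∪
  {c | ∃ (t : Fin ℓ) (j : Fin n) (i : Fin m), δ j i = none ∧
    c = [(SatVar.y j t.castSucc, false), (SatVar.x i t, false)]}

/-- The group `S` of synchronization clauses: `¬y_{r,ℓ} ∨ ¬y_{s,ℓ}` for `1 ≤ r < s ≤ n`. -/
def clausesS (n m ℓ : ℕ) : Set (SatClause n m ℓ) :=
  {c | ∃ r s : Fin n, r < s ∧
    c = [(SatVar.y r (Fin.last ℓ), false), (SatVar.y s (Fin.last ℓ), false)]}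

/-- The set `C = I ∪ L ∪ T ∪ S` of clauses of the SAT instance encoding `(A, ℓ)`. -/
def encodingClauses {n m : ℕ} (δ : Fin n → Fin m → Option (Fin n)) (ℓ : ℕ) :
    Set (SatClause n m ℓ) :=
  clausesI n m ℓ ∪ clausesL n m ℓ ∪ clausesT δ ℓ ∪ clausesS n m ℓ

/-!
A true state variable at time `t - 1` and a true letter variable at time `t` activate a transition
clause: it rules out that the letter is undefined at the state, and makes the state variable of the
image true at time `t`. So a state with true variable, present at time `0` by the initial clauses,
survives along the whole word.
-/

section Word

variable {n m : ℕ} {δ : Fin n → Fin m → Option (Fin n)}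

theorem mem_pfaExt_append_singleton {S : Set (Fin n)} {v : List (Fin m)} {a : Fin m} {p : Fin n} :
    p ∈ pfaExt δ S (v ++ [a]) ↔ ∃ q ∈ pfaExt δ S v, δ q a = some p := by
  simp only [pfaExt, List.foldl_append, List.foldl_cons, List.foldl_nil, Set.mem_ofPred_eq]

theorem take_succ_map_finRange {α : Type*} {ℓ : ℕ} (f : Fin ℓ → α) (t : Fin ℓ) :
    ((List.finRange ℓ).map f).take (t + 1) = ((List.finRange ℓ).map f).take t ++ [f t] := by
  rw [List.take_succ_eq_append_getElem (by simp)]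
  simp

end Word

section Encoding

variable {n m ℓ : ℕ} {δ : Fin n → Fin m → Option (Fin n)} {φ : SatVar n m ℓ → Bool}

theorem Satisfies.mono {C D : Set (SatClause n m ℓ)} (hD : Satisfies φ D) (hCD : C ⊆ D) :
    Satisfies φ C :=
  fun c hc => hD c (hCD hc)

theorem clausesI_union_clausesT_subset_encodingClauses :
    clausesI n m ℓ ∪ clausesT δ ℓ ⊆ encodingClauses δ ℓ :=
  Set.union_subset_union_left _ Set.subset_union_left |>.trans Set.subset_union_left

theorem satisfies_clausesI_iff :
    Satisfies φ (clausesI n m ℓ) ↔ ∀ j, φ (SatVar.y j 0) = true := by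
  simp [Satisfies, clausesI, SatisfiesClause]

theorem Satisfies.exists_transition (hT : Satisfies φ (clausesT δ ℓ)) {t : Fin ℓ} {j : Fin n}
    {i : Fin m} (hy : φ (SatVar.y j t.castSucc) = true) (hx : φ (SatVar.x i t) = true) :
    ∃ k, δ j i = some k ∧ φ (SatVar.y k t.succ) = true := by
  cases hδ : δ j i with
  | none =>
    have undefined_clause := hT _ (.inr ⟨t, j, i, hδ, rfl⟩)
    simp [SatisfiesClause, hy, hx] at undefined_clause
  | some k =>
    have image_clause := hT _ (.inl ⟨t, j, i, k, hδ, rfl⟩)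
    exact ⟨k, rfl, by simpa [SatisfiesClause, hy, hx] using image_clause⟩

theorem Satisfies.exists_mem_pfaExt_take (hT : Satisfies φ (clausesT δ ℓ)) {χ : Fin ℓ → Fin m}
    (hχ : ∀ t, φ (SatVar.x (χ t) t) = true) {S : Set (Fin n)}
    (hS : ∃ q ∈ S, φ (SatVar.y q 0) = true) (t : Fin (ℓ + 1)) :
    ∃ q ∈ pfaExt δ S (((List.finRange ℓ).map χ).take t), φ (SatVar.y q t) = true := by
  induction t using Fin.induction with
  | zero => exact hS
  | succ t ih =>
    obtain ⟨q, hq, hy⟩ := ih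
    obtain ⟨p, hδ, hp⟩ := hT.exists_transition hy (hχ t)
    refine ⟨p, ?_, hp⟩
    rw [Fin.val_succ, take_succ_map_finRange]
    exact mem_pfaExt_append_singleton.2 ⟨q, hq, hδ⟩

theorem sat_active_states_nonempty_general (hφ : Satisfies φ (clausesI n m ℓ ∪ clausesT δ ℓ))
    {χ : Fin ℓ → Fin m} (hχ : ∀ t, φ (SatVar.x (χ t) t) = true) {S : Set (Fin n)}
    (hS : S.Nonempty) (t : Fin (ℓ + 1)) :
    (pfaExt δ S (((List.finRange ℓ).map χ).take t)).Nonempty := by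
  have hI : ∀ j, φ (SatVar.y j 0) = true :=
    satisfies_clausesI_iff.1 (hφ.mono Set.subset_union_left)
  have hT : Satisfies φ (clausesT δ ℓ) := hφ.mono Set.subset_union_right
  obtain ⟨q₀, hq₀⟩ := hS
  obtain ⟨q, hq, -⟩ := hT.exists_mem_pfaExt_take hχ ⟨q₀, hq₀, hI q₀⟩ t
  exact ⟨q, hq⟩

end Encoding

/-- Claim 1: with `φ` a satisfying assignment of the SAT instance encoding `(A, ℓ)`,
`χ` the map assigning to each `t` the unique `i` with `φ(x_{i,t}) = 1`, and
`w = a_{χ(1)} ⋯ a_{χ(ℓ)}`, for each `t = 0, 1, …, ℓ` the set `δ(Q, w_t)` (where `w_t`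
is the length-`t` prefix of `w`) is nonempty. -/
theorem sat_active_states_nonempty {n m ℓ : ℕ} (hn : 0 < n) (hm : 0 < m) (hℓ : 0 < ℓ)
    (δ : Fin n → Fin m → Option (Fin n))
    (φ : SatVar n m ℓ → Bool) (hφ : Satisfies φ (encodingClauses δ ℓ))
    (χ : Fin ℓ → Fin m) (hχ : ∀ t : Fin ℓ, ∀ i : Fin m, φ (SatVar.x i t) = true ↔ i = χ t) :
    ∀ t : ℕ, t ≤ ℓ →
      (pfaExt δ Set.univ (((List.finRange ℓ).map χ).take t)).Nonempty := by
  intro t ht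
  exact sat_active_states_nonempty_general
    (hφ.mono clausesI_union_clausesT_subset_encodingClauses) (fun t => (hχ t _).2 rfl)
    ⟨⟨0, hn⟩, Set.mem_univ _⟩ ⟨t, Nat.lt_succ_of_le ht⟩
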